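/- For every oriented rectangular diagram R one has tb(R) + tb(R̄) = −c(R), where R̄ is the diagram obtained from R by rotating the plane clockwise by π/2 (with the induced orientation, and again with the convention that vertical edges overcross), and c(R) is the complexity of R. -/

import Mathlib

noncomputable section
open scoped Classical

/-- A point of the plane. -/
abbrev Pt : Type := ℝ × ℝ

/-- A rectangular diagram: a finite set of points in the plane such that every
vertical or horizontal straight line contains either no points or exactly two points of it. -/
def IsDiagram (R : Finset Pt) : Prop :=
  ∀ p ∈ R, (R.filter (fun q => q.1 = p.1)).card = 2 ∧
    (R.filter (fun q => q.2 = p.2)).card = 2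

/-- The complexity of a rectangular diagram: the number of its vertical edges. -/
def complexity (R : Finset Pt) : ℕ := (R.image Prod.fst).card

/-- Moving the vertical line `x0` to position `x1` (all other points unchanged). -/
def vmap (x0 x1 : ℝ) : Pt → Pt := fun p => if p.1 = x0 then (x1, p.2) else p

/-- Moving the horizontal line `y0` to position `y1`. -/
def hmap (y0 y1 : ℝ) : Pt → Pt := fun p => if p.2 = y0 then (p.1, y1) else p

/-- Exchanging the vertical lines `x1` and `x2`. -/
def swapv (x1 x2 : ℝ) : Pt → Pt := fun p =>
  if p.1 = x1 then (x2, p.2) else if p.1 = x2 then (x1, p.2) else p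

/-- Exchanging the horizontal lines `y1` and `y2`. -/
def swaph (y1 y2 : ℝ) : Pt → Pt := fun p =>
  if p.2 = y1 then (p.1, y2) else if p.2 = y2 then (p.1, y1) else p

/-- `f` realizes a cyclic permutation on the finite set `R`:  an extreme (left/right/top/bottom)
edge is moved to the opposite side of the diagram. -/
def CyclicData (R : Finset Pt) (f : Pt → Pt) : Prop :=
  (∃ x0 x1 : ℝ, (∃ p ∈ R, p.1 = x0) ∧
     (((∀ p ∈ R, x0 ≤ p.1) ∧ ∀ p ∈ R, p.1 ≠ x0 → p.1 < x1) ∨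
      ((∀ p ∈ R, p.1 ≤ x0) ∧ ∀ p ∈ R, p.1 ≠ x0 → x1 < p.1)) ∧
     f = vmap x0 x1) ∨
  (∃ y0 y1 : ℝ, (∃ p ∈ R, p.2 = y0) ∧
     (((∀ p ∈ R, y0 ≤ p.2) ∧ ∀ p ∈ R, p.2 ≠ y0 → p.2 < y1) ∨
      ((∀ p ∈ R, p.2 ≤ y0) ∧ ∀ p ∈ R, p.2 ≠ y0 → y1 < p.2)) ∧
     f = hmap y0 y1)

/-- The pairs of second coordinates of the points of `R` on the vertical lines `x1`, `x2`
do not interleave. -/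
def NoInterleaveV (R : Finset Pt) (x1 x2 : ℝ) : Prop :=
  ∀ p ∈ R, ∀ p' ∈ R, ∀ q ∈ R, ∀ q' ∈ R,
    p.1 = x1 → p'.1 = x1 → q.1 = x2 → q'.1 = x2 →
    ¬ ((p.2 < q.2 ∧ q.2 < p'.2 ∧ p'.2 < q'.2) ∨
       (q.2 < p.2 ∧ p.2 < q'.2 ∧ q'.2 < p'.2))

/-- The pairs of first coordinates of the points of `R` on the horizontal lines `y1`, `y2`
do not interleave. -/
def NoInterleaveH (R : Finset Pt) (y1 y2 : ℝ) : Prop :=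
  ∀ p ∈ R, ∀ p' ∈ R, ∀ q ∈ R, ∀ q' ∈ R,
    p.2 = y1 → p'.2 = y1 → q.2 = y2 → q'.2 = y2 →
    ¬ ((p.1 < q.1 ∧ q.1 < p'.1 ∧ p'.1 < q'.1) ∨
       (q.1 < p.1 ∧ p.1 < q'.1 ∧ q'.1 < p'.1))

/-- `f` realizes a commutation on `R`: two neighboring parallel edges, whose pairs of endpoints
projected to the common axis are disjoint and do not interleave, are exchanged. -/
def CommData (R : Finset Pt) (f : Pt → Pt) : Prop :=
  (∃ x1 x2 : ℝ, x1 ≠ x2 ∧ (∃ p ∈ R, p.1 = x1) ∧ (∃ p ∈ R, p.1 = x2) ∧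
     (∀ p ∈ R, ¬ (min x1 x2 < p.1 ∧ p.1 < max x1 x2)) ∧
     (∀ p ∈ R, ∀ q ∈ R, p.1 = x1 → q.1 = x2 → p.2 ≠ q.2) ∧
     NoInterleaveV R x1 x2 ∧ f = swapv x1 x2) ∨
  (∃ y1 y2 : ℝ, y1 ≠ y2 ∧ (∃ p ∈ R, p.2 = y1) ∧ (∃ p ∈ R, p.2 = y2) ∧
     (∀ p ∈ R, ¬ (min y1 y2 < p.2 ∧ p.2 < max y1 y2)) ∧
     (∀ p ∈ R, ∀ q ∈ R, p.2 = y1 → q.2 = y2 → p.1 ≠ q.1) ∧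
     NoInterleaveH R y1 y2 ∧ f = swaph y1 y2)

/-- A cyclic permutation move of rectangular diagrams. -/
def CyclicMove (R R' : Finset Pt) : Prop :=
  IsDiagram R ∧ IsDiagram R' ∧ ∃ f, CyclicData R f ∧ R' = R.image f

/-- A commutation move of rectangular diagrams. -/
def CommMove (R R' : Finset Pt) : Prop :=
  IsDiagram R ∧ IsDiagram R' ∧ ∃ f, CommData R f ∧ R' = R.image f

/-- The type of a stabilization/destabilization. -/
inductive StabType
  | I : StabType
  | II : StabType
deriving DecidableEq

/-- Result of replacing the vertex `(x, y)` by the three other vertices of the small square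
with corners `(x, y)`, `(x', y)`, `(x, y')`, `(x', y')`. -/
def stabSet (x y x' y' : ℝ) (C : Finset Pt) : Finset Pt :=
  insert ((x', y) : Pt) (insert ((x, y') : Pt) (insert ((x', y') : Pt) (C.erase (x, y))))

/-- The data of a stabilization of `R` at the vertex `(x, y)`, yielding `R'`:  the vertex is
replaced by the three other corners of a small square (`x'`, `y'` are fresh coordinates,
and no coordinate of `R` lies strictly between `x, x'` nor between `y, y'`). -/
def StabData (x y x' y' : ℝ) (R R' : Finset Pt) : Prop :=
  (x, y) ∈ R ∧ x ≠ x' ∧ y ≠ y' ∧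
  (∀ p ∈ R, p.1 ≠ x') ∧ (∀ p ∈ R, p.2 ≠ y') ∧
  (∀ p ∈ R, ¬ (min x x' < p.1 ∧ p.1 < max x x')) ∧
  (∀ p ∈ R, ¬ (min y y' < p.2 ∧ p.2 < max y y')) ∧
  R' = stabSet x y x' y' R

/-- A stabilization of type `t` occurring at the vertex `v` of `R`.  The type is I when the two
new short edges point from their common vertex downward-and-leftward or upward-and-rightward. -/
def StabMoveAt (t : StabType) (v : Pt) (R R' : Finset Pt) : Prop :=
  IsDiagram R ∧ IsDiagram R' ∧
  ∃ x' y' : ℝ, StabData v.1 v.2 x' y' R R' ∧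
    (t = StabType.I ↔ 0 < (v.1 - x') * (v.2 - y'))

/-- A stabilization of type `t`. -/
def StabMove (t : StabType) (R R' : Finset Pt) : Prop :=
  ∃ v : Pt, StabMoveAt t v R R'

/-- A complexity-preserving elementary move: a cyclic permutation or a commutation. -/
def ExchangeMove (R R' : Finset Pt) : Prop := CyclicMove R R' ∨ CommMove R R'

/-- An elementary move of rectangular diagrams: a cyclic permutation, a commutation,
a stabilization or a destabilization. -/
def ElemMove (R R' : Finset Pt) : Prop :=
  CyclicMove R R' ∨ CommMove R R' ∨ ∃ t, StabMove t R R' ∨ StabMove t R' R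

/-- An elementary move involving no stabilization or destabilization of type other than `t`. -/
def LegMove (t : StabType) (R R' : Finset Pt) : Prop :=
  CyclicMove R R' ∨ CommMove R R' ∨ StabMove t R R' ∨ StabMove t R' R

/-- Legendrian equivalence: connected by a finite sequence of elementary moves containing
no type II stabilizations or destabilizations. -/
def LegEquiv : Finset Pt → Finset Pt → Prop :=
  Relation.ReflTransGen (LegMove StabType.I)

/-- Connected by a finite sequence of elementary moves containing
no type I stabilizations or destabilizations. -/
def MirrorEquiv : Finset Pt → Finset Pt → Prop :=
  Relation.ReflTransGen (LegMove StabType.II)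

/-- An elementary simplification of type `t` : a finite sequence of cyclic permutations and
commutations followed by one destabilization of type `t`. -/
def ElemSimp (t : StabType) (R R' : Finset Pt) : Prop :=
  ∃ S, Relation.ReflTransGen ExchangeMove R S ∧ StabMove t R' S
/-- An orientation of a rectangular diagram, given by a coloring of its vertices in black
(`true`) and white (`false`):  the two vertices on a common vertical or horizontal line get
opposite colors; vertical edges are directed from the black endpoint to the white one,
horizontal edges from the white endpoint to the black one. -/
def IsOrientation (R : Finset Pt) (o : Pt → Bool) : Prop :=
  ∀ p ∈ R, ∀ q ∈ R, p ≠ q → (p.1 = q.1 ∨ p.2 = q.2) → o p ≠ o q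

/-- The writhe of an oriented rectangular diagram: the algebraic number of crossings, where
at every crossing the vertical edge is the overpass. -/
def writhe (R : Finset Pt) (o : Pt → Bool) : ℤ :=
  ∑ a ∈ R, ∑ b ∈ R, ∑ c ∈ R, ∑ d ∈ R,
    if a.1 = b.1 ∧ o a = true ∧ o b = false ∧
       c.2 = d.2 ∧ o c = false ∧ o d = true ∧
       min c.1 d.1 < a.1 ∧ a.1 < max c.1 d.1 ∧
       min a.2 b.2 < c.2 ∧ c.2 < max a.2 b.2 then
      -((if a.2 < b.2 then (1 : ℤ) else -1) * (if c.1 < d.1 then (1 : ℤ) else -1))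
    else 0

/-- The number of cusps of the associated Legendrian front: the number of vertices of `R` at
which the incident vertical edge goes upward and the incident horizontal edge goes leftward,
or the vertical edge goes downward and the horizontal edge goes rightward. -/
def cusps (R : Finset Pt) : ℕ :=
  (R.filter (fun p => ∃ q ∈ R, ∃ r ∈ R, q ≠ p ∧ q.1 = p.1 ∧ r ≠ p ∧ r.2 = p.2 ∧
     ((p.2 < q.2 ∧ r.1 < p.1) ∨ (q.2 < p.2 ∧ p.1 < r.1)))).card

/-- The Thurston–Bennequin number of an oriented rectangular diagram. -/
def tb (R : Finset Pt) (o : Pt → Bool) : ℚ :=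
  (writhe R o : ℚ) - (cusps R : ℚ) / 2

/-!
Rotation exchanges vertical and horizontal edges, so at each crossing the overpass and the underpass
are exchanged and the sign changes: the writhe of `R̄` is minus that of `R`. At each vertex exactly
one of the two edge directions changes sign, so a vertex is a cusp of `R̄` iff it is not a cusp
of `R`. Hence the two cusp numbers add up to the number of vertices, which is `2 c(R)`, as each
vertical edge has two endpoints.
-/

/-- The rotation of the plane clockwise by `π/2`. -/
def rotateCW : Pt ≃ Pt where
  toFun p := (p.2, -p.1)
  invFun p := (-p.2, p.1)
  left_inv p := by simp
  right_inv p := by simp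

/-- The coloring of the rotated diagram that encodes the induced orientation. Vertical edges run
from black to white and horizontal edges from white to black, so the colors get exchanged. -/
def rotateColoring (o : Pt → Bool) (p : Pt) : Bool := !o (rotateCW.symm p)

@[simp] theorem rotateCW_fst (p : Pt) : (rotateCW p).1 = p.2 := rfl

@[simp] theorem rotateCW_snd (p : Pt) : (rotateCW p).2 = -p.1 := rfl

@[simp] theorem rotateColoring_rotateCW (o : Pt → Bool) (p : Pt) :
    rotateColoring o (rotateCW p) = !o p := by
  simp [rotateColoring]

section Writhe

variable (R : Finset Pt) (o : Pt → Bool) (a b c d : Pt)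

/-- The vertical edge directed from `a` to `b` crosses the horizontal edge directed from `c`
to `d`. -/
def IsCrossing : Prop :=
  a.1 = b.1 ∧ o a = true ∧ o b = false ∧
    c.2 = d.2 ∧ o c = false ∧ o d = true ∧
    min c.1 d.1 < a.1 ∧ a.1 < max c.1 d.1 ∧
    min a.2 b.2 < c.2 ∧ c.2 < max a.2 b.2

/-- The direction, `1` or `-1`, of an axis-parallel edge whose varying coordinate goes from `x`
to `y`; a degenerate edge `x = y` gets `-1`, as in `writhe`. -/
def edgeDirection (x y : ℝ) : ℤ := if x < y then 1 else -1

/-- The sign of a crossing of the vertical overpass from `a` to `b` with the horizontal underpass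
from `c` to `d`. -/
def crossingSign : ℤ := -(edgeDirection a.2 b.2 * edgeDirection c.1 d.1)

/-- The contribution to the writhe of the candidate edges from `a` to `b` and from `c` to `d`. -/
def crossingTerm : ℤ :=
  if IsCrossing o a b c d then crossingSign a b c d else 0

theorem writhe_eq_sum_crossingTerm :
    writhe R o = ∑ a ∈ R, ∑ b ∈ R, ∑ c ∈ R, ∑ d ∈ R, crossingTerm o a b c d := by
  simp only [writhe, crossingTerm]
  congr!

theorem isCrossing_rotateCW :
    IsCrossing (rotateColoring o) (rotateCW c) (rotateCW d) (rotateCW a) (rotateCW b) ↔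
      IsCrossing o a b c d := by
  simp only [IsCrossing, rotateCW_fst, rotateCW_snd, rotateColoring_rotateCW,
    Bool.not_eq_true', Bool.not_eq_false', neg_inj, min_neg_neg, max_neg_neg, neg_lt_neg_iff]
  tauto

variable {o a b c d} in
theorem IsCrossing.fst_ne_fst (h : IsCrossing o a b c d) : c.1 ≠ d.1 := by
  obtain ⟨-, -, -, -, -, -, hmin, hmax, -, -⟩ := h
  exact min_lt_max.mp (hmin.trans hmax)

theorem edgeDirection_neg_neg {x y : ℝ} (h : x ≠ y) :
    edgeDirection (-x) (-y) = -edgeDirection x y := by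
  rcases h.lt_or_gt with h | h <;> simp [edgeDirection, h, h.not_gt]

variable {c d} in
theorem crossingSign_rotateCW (hcd : c.1 ≠ d.1) :
    crossingSign (rotateCW c) (rotateCW d) (rotateCW a) (rotateCW b) =
      -crossingSign a b c d := by
  simp only [crossingSign, rotateCW_fst, rotateCW_snd, edgeDirection_neg_neg hcd]
  ring

theorem crossingTerm_rotateCW :
    crossingTerm (rotateColoring o) (rotateCW c) (rotateCW d) (rotateCW a) (rotateCW b) =
      -crossingTerm o a b c d := by
  simp only [crossingTerm, isCrossing_rotateCW]
  split_ifs with h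
  · exact crossingSign_rotateCW a b h.fst_ne_fst
  · exact neg_zero.symm

theorem writhe_image_rotateCW : writhe (R.image rotateCW) (rotateColoring o) = -writhe R o := by
  calc
    writhe (R.image rotateCW) (rotateColoring o)
    _ = ∑ c ∈ R, ∑ d ∈ R, ∑ a ∈ R, ∑ b ∈ R,
          crossingTerm (rotateColoring o) (rotateCW c) (rotateCW d) (rotateCW a) (rotateCW b) := by
      simp only [writhe_eq_sum_crossingTerm, Finset.sum_image rotateCW.injective.injOn]
    _ = -∑ c ∈ R, ∑ d ∈ R, ∑ a ∈ R, ∑ b ∈ R, crossingTerm o a b c d := by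
      simp only [crossingTerm_rotateCW, Finset.sum_neg_distrib]
    _ = -∑ c ∈ R, ∑ a ∈ R, ∑ b ∈ R, ∑ d ∈ R, crossingTerm o a b c d :=
      congrArg Neg.neg (Finset.sum_congr rfl fun _ _ => Finset.sum_comm_cycle.symm)
    _ = -writhe R o := by rw [writhe_eq_sum_crossingTerm, ← Finset.sum_comm_cycle]

end Writhe

section Cusps

/-- `q` is the other endpoint of the vertical edge of `R` at `p`. -/
def IsVerticalNeighbor (R : Finset Pt) (p q : Pt) : Prop := q ∈ R ∧ q ≠ p ∧ q.1 = p.1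

/-- `q` is the other endpoint of the horizontal edge of `R` at `p`. -/
def IsHorizontalNeighbor (R : Finset Pt) (p q : Pt) : Prop := q ∈ R ∧ q ≠ p ∧ q.2 = p.2

/-- `p` is a cusp of the associated Legendrian front: one of its edges leaves in a positive
coordinate direction and the other one in a negative direction. The negative product states both
cases at once and changes sign under rotation. -/
def IsFrontCusp (R : Finset Pt) (p : Pt) : Prop :=
  ∃ q r, IsVerticalNeighbor R p q ∧ IsHorizontalNeighbor R p r ∧
    (q.2 - p.2) * (r.1 - p.1) < 0

theorem exists_forall_mem_and_ne_iff_of_card_eq_two {α : Type*} {s : Finset α} {a : α}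
    (hs : s.card = 2) (ha : a ∈ s) : ∃ b, ∀ c, c ∈ s ∧ c ≠ a ↔ c = b := by
  obtain ⟨b, hb⟩ : ∃ b, s.erase a = {b} :=
    Finset.card_eq_one.mp (by rw [Finset.card_erase_of_mem ha, hs])
  exact ⟨b, fun c => by rw [← Finset.mem_singleton, ← hb, Finset.mem_erase, and_comm]⟩

variable {R : Finset Pt} {p q r : Pt}

theorem IsDiagram.exists_forall_isVerticalNeighbor_iff (hR : IsDiagram R) (hp : p ∈ R) :
    ∃ q, ∀ q', IsVerticalNeighbor R p q' ↔ q' = q := by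
  obtain ⟨q, hq⟩ := exists_forall_mem_and_ne_iff_of_card_eq_two (hR p hp).1
    (Finset.mem_filter.mpr ⟨hp, rfl⟩)
  exact ⟨q, fun q' => by rw [← hq, Finset.mem_filter, IsVerticalNeighbor]; tauto⟩

theorem IsDiagram.exists_forall_isHorizontalNeighbor_iff (hR : IsDiagram R) (hp : p ∈ R) :
    ∃ q, ∀ q', IsHorizontalNeighbor R p q' ↔ q' = q := by
  obtain ⟨q, hq⟩ := exists_forall_mem_and_ne_iff_of_card_eq_two (hR p hp).2
    (Finset.mem_filter.mpr ⟨hp, rfl⟩)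
  exact ⟨q, fun q' => by rw [← hq, Finset.mem_filter, IsHorizontalNeighbor]; tauto⟩

theorem IsVerticalNeighbor.snd_ne_snd (h : IsVerticalNeighbor R p q) : q.2 ≠ p.2 :=
  fun hsnd => h.2.1 (Prod.ext h.2.2 hsnd)

theorem IsHorizontalNeighbor.fst_ne_fst (h : IsHorizontalNeighbor R p q) : q.1 ≠ p.1 :=
  fun hfst => h.2.1 (Prod.ext hfst h.2.2)

theorem isVerticalNeighbor_image_rotateCW :
    IsVerticalNeighbor (R.image rotateCW) (rotateCW p) (rotateCW q) ↔
      IsHorizontalNeighbor R p q := by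
  simp [IsVerticalNeighbor, IsHorizontalNeighbor]

theorem isHorizontalNeighbor_image_rotateCW :
    IsHorizontalNeighbor (R.image rotateCW) (rotateCW p) (rotateCW q) ↔
      IsVerticalNeighbor R p q := by
  simp [IsVerticalNeighbor, IsHorizontalNeighbor]

theorem isFrontCusp_iff (hq : ∀ q', IsVerticalNeighbor R p q' ↔ q' = q)
    (hr : ∀ r', IsHorizontalNeighbor R p r' ↔ r' = r) :
    IsFrontCusp R p ↔ (q.2 - p.2) * (r.1 - p.1) < 0 := by
  simp [IsFrontCusp, hq, hr]

theorem IsDiagram.isFrontCusp_image_rotateCW_iff_not (hR : IsDiagram R) (hp : p ∈ R) :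
    IsFrontCusp (R.image rotateCW) (rotateCW p) ↔ ¬IsFrontCusp R p := by
  obtain ⟨q, hq⟩ := hR.exists_forall_isVerticalNeighbor_iff hp
  obtain ⟨r, hr⟩ := hR.exists_forall_isHorizontalNeighbor_iff hp
  have hq_rotate (q' : Pt) :
      IsHorizontalNeighbor (R.image rotateCW) (rotateCW p) q' ↔ q' = rotateCW q := by
    obtain ⟨q', rfl⟩ := rotateCW.surjective q'
    rw [isHorizontalNeighbor_image_rotateCW, hq, rotateCW.injective.eq_iff]
  have hr_rotate (r' : Pt) :
      IsVerticalNeighbor (R.image rotateCW) (rotateCW p) r' ↔ r' = rotateCW r := by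
    obtain ⟨r', rfl⟩ := rotateCW.surjective r'
    rw [isVerticalNeighbor_image_rotateCW, hr, rotateCW.injective.eq_iff]
  have product_ne_zero : (q.2 - p.2) * (r.1 - p.1) ≠ 0 :=
    mul_ne_zero (sub_ne_zero.mpr ((hq q).mpr rfl).snd_ne_snd)
      (sub_ne_zero.mpr ((hr r).mpr rfl).fst_ne_fst)
  have product_rotate :
      ((rotateCW r).2 - (rotateCW p).2) * ((rotateCW q).1 - (rotateCW p).1) =
        -((q.2 - p.2) * (r.1 - p.1)) := by
    simp only [rotateCW_fst, rotateCW_snd]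
    ring
  rw [isFrontCusp_iff hr_rotate hq_rotate, isFrontCusp_iff hq hr, product_rotate, neg_lt_zero,
    not_lt, product_ne_zero.symm.le_iff_lt]

theorem cusps_eq_card_filter_isFrontCusp (R : Finset Pt) :
    cusps R = (R.filter (IsFrontCusp R)).card := by
  unfold cusps
  congr 1
  refine Finset.filter_congr fun p _ => ?_
  simp only [IsFrontCusp, IsVerticalNeighbor, IsHorizontalNeighbor, mul_neg_iff, sub_pos, sub_neg,
    ← exists_and_left]
  exact exists_congr fun q => exists_congr fun r => by tauto

theorem IsDiagram.cusps_add_cusps_image_rotateCW (hR : IsDiagram R) :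
    cusps R + cusps (R.image rotateCW) = R.card := by
  have card_rotate : cusps (R.image rotateCW) = (R.filter fun p => ¬IsFrontCusp R p).card := by
    rw [cusps_eq_card_filter_isFrontCusp, Finset.filter_image,
      Finset.card_image_of_injective _ rotateCW.injective]
    exact congrArg Finset.card
      (Finset.filter_congr fun p hp => hR.isFrontCusp_image_rotateCW_iff_not hp)
  rw [cusps_eq_card_filter_isFrontCusp R, card_rotate, Finset.card_filter_add_card_filter_not]

end Cusps

theorem IsDiagram.card_eq_complexity_mul_two {R : Finset Pt} (hR : IsDiagram R) :
    R.card = complexity R * 2 := by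
  rw [complexity, Finset.card_eq_sum_card_image Prod.fst R]
  refine Finset.sum_const_nat fun x hx => ?_
  obtain ⟨p, hp, rfl⟩ := Finset.mem_image.mp hx
  exact (hR p hp).1

/-- **Theorem.** For every oriented rectangular diagram `R`, one has
`tb R + tb R̄ = -c(R)`, where `R̄` is obtained from `R` by a clockwise rotation by `π/2`
(with the induced orientation) and `c(R)` is the complexity. -/
theorem tb_sum_eq_neg_complexity (R : Finset Pt) (o : Pt → Bool)
    (hR : IsDiagram R) (ho : IsOrientation R o) :
    tb R o + tb (R.image (fun p => (p.2, -p.1)))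
        (fun p => ! o (-p.2, p.1)) = -(complexity R : ℚ) := by
  change tb R o + tb (R.image rotateCW) (rotateColoring o) = _
  have cusps_add : (cusps R + cusps (R.image rotateCW) : ℚ) = complexity R * 2 := by
    exact_mod_cast hR.cusps_add_cusps_image_rotateCW.trans hR.card_eq_complexity_mul_two
  rw [tb, tb, writhe_image_rotateCW]
  push_cast
  linarith
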